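/- arXiv:math/0510283 — 7 statements merged into one kernel-verified Lean document; each statement's English description precedes it below -/
import Mathlib

section
/- For every i with 1 ≤ i < k, the fundamental weight ω_{i+1} equals the sum ω + φ_1(ω) + (φ_2∘φ_1)(ω) + ... + (φ_i∘φ_{i-1}∘⋯∘φ_1)(ω); that is, ω_{i+1} = Σ_{s=0}^{i} (φ_s∘φ_{s-1}∘⋯∘φ_1)(ω), where the s = 0 term is ω itself. -/
/-!
Write `x_s = φ_s ⋯ φ_1 (ω_1)`. Along the arm, `x_s` pairs with the simple coroots exactly as
`ω_{s+1} - ω_s` does (`two_inner_armComp`): reflecting `x_s` in `θ_{s+1}`, on whose coroot it takes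
the value `1`, subtracts `θ_{s+1}`, and the arm condition says that `θ_{s+1}` has coroot values
`-1, 2, -1` at `s, s+1, s+2` and `0` elsewhere. Hence the sum `x_0 + ⋯ + x_i` telescopes to
something with the same coroot values as `ω_{i+1}`, and since the simple roots span the space, the
two vectors agree.
-/

open scoped RealInnerProductSpace

/-- `armComp φ s = φ_s ∘ φ_{s-1} ∘ ⋯ ∘ φ_1`, with `armComp φ 0 = id`. -/
def armComp {α : Type*} (φ : ℕ → α → α) : ℕ → α → α
  | 0 => id
  | s + 1 => fun x => φ (s + 1) (armComp φ s x)

/-- The pairing of `φ_s ⋯ φ_1 (ω_1)` with the simple coroots is that of `ω_{s+1} - ω_s`, where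
`ω_0` is read as `0`. Only the pairings of `w = ω_1` matter. -/
theorem two_inner_armComp
    {E : Type*} [NormedAddCommGroup E] [InnerProductSpace ℝ E]
    (r k : ℕ) (θ : ℕ → E) (φ : ℕ → E → E) (w : E)
    (hθ : ∀ i, 1 ≤ i → i ≤ r → ⟪θ i, θ i⟫ ≠ 0)
    (hφ : ∀ i, 1 ≤ i → i ≤ r → ∀ x : E,
      φ i x = x - (2 * ⟪x, θ i⟫ / ⟪θ i, θ i⟫) • θ i)
    (hw : ∀ j, 1 ≤ j → j ≤ r → 2 * ⟪w, θ j⟫ = if 1 = j then ⟪θ j, θ j⟫ else 0)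
    (hkr : k ≤ r)
    (harm1 : ∀ i, 1 ≤ i → i < k →
      ⟪θ (i + 1), θ (i + 1)⟫ = ⟪θ i, θ i⟫ ∧
        2 * ⟪θ i, θ (i + 1)⟫ = -⟪θ i, θ i⟫)
    (harm2 : ∀ i j, 1 ≤ i → i < k → 1 ≤ j → j ≤ r → 1 < |(i : ℤ) - (j : ℤ)| →
      ⟪θ i, θ j⟫ = 0)
    (s : ℕ) (hs : s < k) (j : ℕ) (hj1 : 1 ≤ j) (hjr : j ≤ r) :
    2 * ⟪armComp φ s w, θ j⟫ =
      (if s + 1 = j then ⟪θ j, θ j⟫ else 0) - (if s = j then ⟪θ j, θ j⟫ else 0) := by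
  induction s generalizing j with
  | zero =>
    have h0 : ¬ 0 = j := by omega
    simpa [armComp, h0] using hw j hj1 hjr
  | succ s ih =>
    have hstep : armComp φ (s + 1) w = armComp φ s w - θ (s + 1) := by
      have h := ih (by omega) (s + 1) (by omega) (by omega)
      rw [if_pos rfl, if_neg (by omega), sub_zero] at h
      change φ (s + 1) (armComp φ s w) = _
      rw [hφ _ (by omega) (by omega), h, div_self (hθ _ (by omega) (by omega)), one_smul]
    rw [hstep, inner_sub_left, mul_sub, ih (by omega) j hj1 hjr]
    by_cases h1 : j = s + 1
    · subst h1
      simp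
      ring
    by_cases h2 : j = s + 2
    · subst h2
      obtain ⟨ha, hb⟩ := harm1 (s + 1) (by omega) hs
      rw [hb, ← ha]
      simp
    by_cases h3 : j = s
    · subst h3
      have hb := (harm1 j hj1 (by omega)).2
      rw [real_inner_comm] at hb
      rw [hb, if_neg (by omega), if_pos rfl, if_neg (by omega)]
      ring
    · have h0 := harm2 (s + 1) j (by omega) hs hj1 hjr (by rw [lt_abs]; push_cast; omega)
      rw [h0, if_neg (by omega), if_neg (by omega), if_neg (by omega)]
      ring

theorem stmt_0
    {E : Type*} [NormedAddCommGroup E] [InnerProductSpace ℝ E] [FiniteDimensional ℝ E]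
    (r k : ℕ) (θ ω : ℕ → E) (φ : ℕ → E → E)
    (hbasis : LinearIndependent ℝ (fun i : Fin r => θ (i + 1)) ∧
      Submodule.span ℝ (Set.range fun i : Fin r => θ (i + 1)) = ⊤)
    (hφ0 : φ 0 = id)
    (hφ : ∀ i, 1 ≤ i → i ≤ r → ∀ x : E,
      φ i x = x - (2 * ⟪x, θ i⟫ / ⟪θ i, θ i⟫) • θ i)
    (hω : ∀ i j, 1 ≤ i → i ≤ r → 1 ≤ j → j ≤ r →
      2 * ⟪ω i, θ j⟫ = if i = j then ⟪θ j, θ j⟫ else 0)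
    (hk1 : 1 ≤ k) (hkr : k ≤ r)
    (harm1 : ∀ i, 1 ≤ i → i < k →
      ⟪θ (i + 1), θ (i + 1)⟫ = ⟪θ i, θ i⟫ ∧
        2 * ⟪θ i, θ (i + 1)⟫ = -⟪θ i, θ i⟫)
    (harm2 : ∀ i j, 1 ≤ i → i < k → 1 ≤ j → j ≤ r → 1 < |(i : ℤ) - (j : ℤ)| →
      ⟪θ i, θ j⟫ = 0)
    (i : ℕ) (hi1 : 1 ≤ i) (hik : i < k) :
    ω (i + 1) = ∑ s ∈ Finset.range (i + 1), armComp φ s (ω 1) := by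
  have hθ : ∀ i, 1 ≤ i → i ≤ r → ⟪θ i, θ i⟫ ≠ 0 := by
    intro m hm1 hmr
    have h := hbasis.1.ne_zero (⟨m - 1, by omega⟩ : Fin r)
    simp only [Nat.sub_add_cancel hm1] at h
    exact inner_self_ne_zero.mpr h
  have hx := two_inner_armComp r k θ φ (ω 1) hθ hφ
    (fun j => hω 1 j le_rfl (by omega)) hkr harm1 harm2
  have hsum : ∀ n < k, ∀ j, 1 ≤ j → j ≤ r →
      2 * ⟪∑ s ∈ Finset.range (n + 1), armComp φ s (ω 1), θ j⟫ =
        if n + 1 = j then ⟪θ j, θ j⟫ else 0 := by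
    intro n hn j hj1 hjr
    -- The boundary term of the telescoping sum at `0` vanishes because `j ≠ 0`.
    rw [sum_inner, Finset.mul_sum,
      Finset.sum_congr rfl fun s hs => hx s (by have := Finset.mem_range.mp hs; omega) j hj1 hjr,
      Finset.sum_range_sub (fun s => if s = j then ⟪θ j, θ j⟫ else 0),
      if_neg (show ¬ 0 = j by omega), sub_zero]
  refine ext_inner_right ℝ fun v => ?_
  have hv : v ∈ Submodule.span ℝ (Set.range fun i : Fin r => θ (i + 1)) := by
    rw [hbasis.2]
    trivial
  induction hv using Submodule.span_induction with
  | mem x hx =>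
    obtain ⟨m, rfl⟩ := hx
    have h1 := hsum i hik (m + 1) (by omega) (by omega)
    have h2 := hω (i + 1) (m + 1) (by omega) (by omega) (by omega) (by omega)
    linarith
  | zero => simp
  | add x y _ _ hx hy => rw [inner_add_right, inner_add_right, hx, hy]
  | smul a x _ hx => rw [inner_smul_right, inner_smul_right, hx]
end

section
/- For every i with 1 ≤ i < k, one has (φ_i∘φ_{i-1}∘⋯∘φ_1)(ω) = ω_{i+1} − ω_i. -/
/-!
On the arm, each simple root is `θ_n = 2 ω_n - ω_{n-1} - ω_{n+1}` (with no `ω_{n-1}` term when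
`n = 1`), since both sides pair equally with every simple root and the simple roots span `E`
(`eq_of_inner_simple_eq`). The reflection `φ_n` sends `ω_n - ω_{n-1}`, whose coefficient along
`θ_n` is `1`, to `ω_n - ω_{n-1} - θ_n = ω_{n+1} - ω_n`, so induction on `n` gives the result.
-/

open scoped RealInnerProductSpace

theorem eq_of_inner_simple_eq {E : Type*} [NormedAddCommGroup E] [InnerProductSpace ℝ E]
    {r : ℕ} {θ : ℕ → E}
    (hspan : Submodule.span ℝ (Set.range fun i : Fin r => θ (i + 1)) = ⊤) {x y : E}
    (h : ∀ j, 1 ≤ j → j ≤ r → 2 * ⟪x, θ j⟫ = 2 * ⟪y, θ j⟫) : x = y := by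
  refine ext_inner_right ℝ fun v => ?_
  have hv : v ∈ Submodule.span ℝ (Set.range fun i : Fin r => θ (i + 1)) := by
    rw [hspan]; trivial
  induction hv using Submodule.span_induction with
  | mem v hv =>
    obtain ⟨i, rfl⟩ := hv
    have := h (i + 1) (by omega) (by omega)
    linarith
  | zero => simp
  | add u v _ _ hu hv => rw [inner_add_right, inner_add_right, hu, hv]
  | smul c v _ hv => rw [inner_smul_right, inner_smul_right, hv]

theorem stmt_1
    {E : Type*} [NormedAddCommGroup E] [InnerProductSpace ℝ E] [FiniteDimensional ℝ E]
    (r k : ℕ) (θ ω : ℕ → E) (φ : ℕ → E → E)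
    (hbasis : LinearIndependent ℝ (fun i : Fin r => θ (i + 1)) ∧
      Submodule.span ℝ (Set.range fun i : Fin r => θ (i + 1)) = ⊤)
    (hφ0 : φ 0 = id)
    (hφ : ∀ i, 1 ≤ i → i ≤ r → ∀ x : E,
      φ i x = x - (2 * ⟪x, θ i⟫ / ⟪θ i, θ i⟫) • θ i)
    (hω : ∀ i j, 1 ≤ i → i ≤ r → 1 ≤ j → j ≤ r →
      2 * ⟪ω i, θ j⟫ = if i = j then ⟪θ j, θ j⟫ else 0)
    (hk1 : 1 ≤ k) (hkr : k ≤ r)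
    (harm1 : ∀ i, 1 ≤ i → i < k →
      ⟪θ (i + 1), θ (i + 1)⟫ = ⟪θ i, θ i⟫ ∧
        2 * ⟪θ i, θ (i + 1)⟫ = -⟪θ i, θ i⟫)
    (harm2 : ∀ i j, 1 ≤ i → i < k → 1 ≤ j → j ≤ r → 1 < |(i : ℤ) - (j : ℤ)| →
      ⟪θ i, θ j⟫ = 0)
    (i : ℕ) (hi1 : 1 ≤ i) (hik : i < k) :
    armComp φ i (ω 1) = ω (i + 1) - ω i := by
  have hne : ∀ n, 1 ≤ n → n ≤ r → ⟪θ n, θ n⟫ ≠ 0 := by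
    intro n h1 h2
    have := hbasis.1.ne_zero ⟨n - 1, by omega⟩
    simp only [Nat.sub_add_cancel h1] at this
    exact inner_self_ne_zero.mpr this
  -- The Cartan integers of the arm, scaled by the squared length of the second root.
  have hθ : ∀ n j, 1 ≤ n → n < k → 1 ≤ j → j ≤ r → 2 * ⟪θ n, θ j⟫ =
      if n = j then 2 * ⟪θ j, θ j⟫ else if n = j + 1 ∨ n + 1 = j then -⟪θ j, θ j⟫ else 0 := by
    intro n j h1 h2 h3 h4
    split_ifs with ha hb
    · rw [ha]
    · rcases hb with rfl | rfl
      · rw [real_inner_comm]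
        exact (harm1 j h3 (by omega)).2
      · rw [(harm1 n h1 h2).1]
        exact (harm1 n h1 h2).2
    · rw [harm2 n j h1 h2 h3 h4 (by rw [lt_abs]; omega), mul_zero]
  induction i, hi1 using Nat.le_induction with
  | base =>
    have hc : 2 * ⟪ω 1, θ 1⟫ / ⟪θ 1, θ 1⟫ = 1 := by
      rw [hω 1 1 le_rfl (by omega) le_rfl (by omega), if_pos rfl]
      exact div_self (hne 1 le_rfl (by omega))
    have hstep : armComp φ 1 (ω 1) = ω 1 - θ 1 := by
      simp only [armComp, id, zero_add]
      rw [hφ 1 le_rfl (by omega), hc, one_smul]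
    rw [hstep]
    refine eq_of_inner_simple_eq hbasis.2 fun j hj1 hjr => ?_
    have e1 := hω 1 j le_rfl (by omega) hj1 hjr
    have e2 := hω (1 + 1) j (by omega) (by omega) hj1 hjr
    have e3 := hθ 1 j le_rfl hik hj1 hjr
    simp only [inner_sub_left, mul_sub, e1, e2, e3]
    split_ifs <;> first | omega | ring
  | succ n hn ih =>
    have hc : 2 * ⟪ω (n + 1) - ω n, θ (n + 1)⟫ / ⟪θ (n + 1), θ (n + 1)⟫ = 1 := by
      rw [inner_sub_left, mul_sub, hω (n + 1) (n + 1) (by omega) (by omega) (by omega) (by omega),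
        hω n (n + 1) hn (by omega) (by omega) (by omega), if_pos rfl, if_neg (by omega), sub_zero]
      exact div_self (hne (n + 1) (by omega) (by omega))
    have hstep : armComp φ (n + 1) (ω 1) = ω (n + 1) - ω n - θ (n + 1) := by
      simp only [armComp]
      rw [ih (by omega), hφ (n + 1) (by omega) (by omega), hc, one_smul]
    rw [hstep]
    refine eq_of_inner_simple_eq hbasis.2 fun j hj1 hjr => ?_
    have e0 := hω n j hn (by omega) hj1 hjr
    have e1 := hω (n + 1) j (by omega) (by omega) hj1 hjr
    have e2 := hω (n + 1 + 1) j (by omega) (by omega) hj1 hjr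
    have e3 := hθ (n + 1) j (by omega) hik hj1 hjr
    simp only [inner_sub_left, mul_sub, e0, e1, e2, e3]
    split_ifs <;> first | omega | ring
end

section
/- Let t be an integer with 1 ≤ t < k and let i_1, i_2, …, i_t be any indices in {1,…,r}. Then there exists an s with 0 ≤ s ≤ t such that (φ_{i_1}∘φ_{i_2}∘⋯∘φ_{i_t})(ω) = (φ_s∘φ_{s-1}∘⋯∘φ_1)(ω). -/
/-!
Write `μ_s = (φ_s ∘ ⋯ ∘ φ_1)(ω_1)`. For `s < k`, `μ_s` is `ω_{s+1} - ω_s` (with `ω_0 = 0`) as far as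
pairings with coroots are concerned: its pairing with the `j`-th coroot is `1` for `j = s + 1`, `-1`
for `j = s`, and `0` otherwise. This is proved by induction on `s`, since `μ_{s+1} = μ_s - θ_{s+1}`
and the arm condition gives the pairings of `θ_{s+1}`. Hence a simple reflection `φ_j` sends `μ_s`
to `μ_{s+1}`, to `μ_{s-1}`, or to itself, and each letter of a word of length `< k` raises the index
by at most one.
-/

open scoped RealInnerProductSpace

theorem stmt_4
    {E : Type*} [NormedAddCommGroup E] [InnerProductSpace ℝ E] [FiniteDimensional ℝ E]
    (r k : ℕ) (θ ω : ℕ → E) (φ : ℕ → E → E)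
    (hbasis : LinearIndependent ℝ (fun i : Fin r => θ (i + 1)) ∧
      Submodule.span ℝ (Set.range fun i : Fin r => θ (i + 1)) = ⊤)
    (hφ0 : φ 0 = id)
    (hφ : ∀ i, 1 ≤ i → i ≤ r → ∀ x : E,
      φ i x = x - (2 * ⟪x, θ i⟫ / ⟪θ i, θ i⟫) • θ i)
    (hω : ∀ i j, 1 ≤ i → i ≤ r → 1 ≤ j → j ≤ r →
      2 * ⟪ω i, θ j⟫ = if i = j then ⟪θ j, θ j⟫ else 0)
    (hk1 : 1 ≤ k) (hkr : k ≤ r)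
    (harm1 : ∀ i, 1 ≤ i → i < k →
      ⟪θ (i + 1), θ (i + 1)⟫ = ⟪θ i, θ i⟫ ∧
        2 * ⟪θ i, θ (i + 1)⟫ = -⟪θ i, θ i⟫)
    (harm2 : ∀ i j, 1 ≤ i → i < k → 1 ≤ j → j ≤ r → 1 < |(i : ℤ) - (j : ℤ)| →
      ⟪θ i, θ j⟫ = 0)
    (l : List ℕ) (hl1 : 1 ≤ l.length) (hlk : l.length < k)
    (hmem : ∀ i ∈ l, 1 ≤ i ∧ i ≤ r) :
    ∃ s ≤ l.length,
      l.foldr (fun i x => φ i x) (ω 1) = armComp φ s (ω 1) := by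
  have hne : ∀ j, 1 ≤ j → j ≤ r → ⟪θ j, θ j⟫ ≠ 0 := by
    intro j h1 h2
    have h := hbasis.1.ne_zero (⟨j - 1, by omega⟩ : Fin r)
    have e : j - 1 + 1 = j := by omega
    simp only [e] at h
    exact inner_self_ne_zero.mpr h
  have step : ∀ s, s + 1 ≤ r → 2 * ⟪armComp φ s (ω 1), θ (s + 1)⟫ = ⟪θ (s + 1), θ (s + 1)⟫ →
      armComp φ (s + 1) (ω 1) = armComp φ s (ω 1) - θ (s + 1) := by
    intro s hs h
    change φ (s + 1) (armComp φ s (ω 1)) = _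
    rw [hφ _ (by omega) hs, h, div_self (hne _ (by omega) hs), one_smul]
  -- At `s = 0` the middle branch is void because `j ≥ 1`.
  have key : ∀ s, s < k → ∀ j, 1 ≤ j → j ≤ r → 2 * ⟪armComp φ s (ω 1), θ j⟫ =
      if j = s + 1 then ⟪θ j, θ j⟫ else if j = s then -⟪θ j, θ j⟫ else 0 := by
    intro s
    induction s with
    | zero =>
      intro _ j h1 h2
      change 2 * ⟪ω 1, θ j⟫ = _
      rw [hω 1 j le_rfl (by omega) h1 h2]
      by_cases h : j = 1
      · simp [h]
      · rw [if_neg (by omega), if_neg (by omega), if_neg (by omega)]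
    | succ s ih =>
      intro hs j h1 h2
      have ih' := ih (by omega)
      rw [step s (by omega) (by rw [ih' (s + 1) (by omega) (by omega), if_pos rfl]),
        inner_sub_left, mul_sub, ih' j h1 h2]
      by_cases ha : j = s + 1 + 1
      · subst ha
        rw [if_neg (by omega), if_neg (by omega), if_pos rfl]
        have h := harm1 (s + 1) (by omega) hs
        linarith [h.1, h.2]
      by_cases hb : j = s + 1
      · subst hb
        rw [if_pos rfl, if_neg (by omega), if_pos rfl]
        ring
      by_cases hc : j = s
      · subst hc
        rw [if_neg (by omega), if_pos rfl, if_neg (by omega), if_neg (by omega)]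
        have h := harm1 j h1 (by omega)
        rw [real_inner_comm (θ j) (θ (j + 1))]
        linarith [h.2]
      · rw [if_neg hb, if_neg hc, if_neg ha, if_neg hb,
          harm2 (s + 1) j (by omega) hs h1 h2 (by rw [lt_abs]; omega)]
        ring
  clear hl1
  induction l with
  | nil => exact ⟨0, le_rfl, rfl⟩
  | cons j l ih =>
    rw [List.length_cons] at hlk
    obtain ⟨s, hs, e⟩ := ih (by omega) (fun i hi => hmem i (List.mem_cons_of_mem _ hi))
    obtain ⟨h1, h2⟩ := hmem j List.mem_cons_self
    have hkey := key s (by omega) j h1 h2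
    rw [List.foldr_cons, List.length_cons, e]
    by_cases ha : j = s + 1
    · subst ha
      exact ⟨s + 1, by omega, rfl⟩
    by_cases hb : j = s
    · obtain ⟨m, rfl⟩ : ∃ m, s = m + 1 := ⟨s - 1, by omega⟩
      subst hb
      refine ⟨m, by omega, ?_⟩
      rw [if_neg (by omega), if_pos rfl] at hkey
      rw [hφ _ h1 h2, hkey, neg_div, div_self (hne _ h1 h2),
        step m h2 (by rw [key m (by omega) _ h1 h2, if_pos rfl])]
      module
    · refine ⟨s, by omega, ?_⟩
      rw [if_neg ha, if_neg hb] at hkey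
      rw [hφ _ h1 h2, hkey, zero_div, zero_smul, sub_zero]
end

section
/- For every v in the fundamental Weyl chamber FWC, the chain of strict inequalities ⟨ω,v⟩ > ⟨φ_1(ω),v⟩ > ⟨(φ_2∘φ_1)(ω),v⟩ > ⋯ > ⟨(φ_{k-1}∘φ_{k-2}∘⋯∘φ_1)(ω),v⟩ holds. -/
/-!
Along the arm each reflection simply subtracts a simple root:
`φ_{s+1}(λ_s) = λ_s - θ_{s+1}`, where `λ_s = (φ_s ∘ ⋯ ∘ φ_1)(ω)`. Hence the inner product with `v`
drops by `⟪θ_{s+1}, v⟫`, which is positive on the fundamental Weyl chamber.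

The subtraction formula says that `2⟪λ_s, θ_{s+1}⟫ = ⟪θ_{s+1}, θ_{s+1}⟫`. This is proved by induction
on `s`, together with the vanishing of `⟪λ_s, θ_j⟫` for `j > s + 1`: passing from `λ_s` to `λ_{s+1}`
changes the pairings by `-⟪θ_{s+1}, θ_j⟫`, which the arm condition determines.
-/

open scoped RealInnerProductSpace

theorem stmt_6
    {E : Type*} [NormedAddCommGroup E] [InnerProductSpace ℝ E] [FiniteDimensional ℝ E]
    (r k : ℕ) (θ ω : ℕ → E) (φ : ℕ → E → E)
    (hbasis : LinearIndependent ℝ (fun i : Fin r => θ (i + 1)) ∧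
      Submodule.span ℝ (Set.range fun i : Fin r => θ (i + 1)) = ⊤)
    (hφ0 : φ 0 = id)
    (hφ : ∀ i, 1 ≤ i → i ≤ r → ∀ x : E,
      φ i x = x - (2 * ⟪x, θ i⟫ / ⟪θ i, θ i⟫) • θ i)
    (hω : ∀ i j, 1 ≤ i → i ≤ r → 1 ≤ j → j ≤ r →
      2 * ⟪ω i, θ j⟫ = if i = j then ⟪θ j, θ j⟫ else 0)
    (hk1 : 1 ≤ k) (hkr : k ≤ r)
    (harm1 : ∀ i, 1 ≤ i → i < k →
      ⟪θ (i + 1), θ (i + 1)⟫ = ⟪θ i, θ i⟫ ∧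
        2 * ⟪θ i, θ (i + 1)⟫ = -⟪θ i, θ i⟫)
    (harm2 : ∀ i j, 1 ≤ i → i < k → 1 ≤ j → j ≤ r → 1 < |(i : ℤ) - (j : ℤ)| →
      ⟪θ i, θ j⟫ = 0)
    (v : E) (hv : ∀ j, 1 ≤ j → j ≤ r → 0 < ⟪θ j, v⟫)
    (s : ℕ) (hs : s + 1 < k) :
    ⟪armComp φ (s + 1) (ω 1), v⟫ < ⟪armComp φ s (ω 1), v⟫ := by
  have hne : ∀ j, 1 ≤ j → j ≤ r → ⟪θ j, θ j⟫ ≠ 0 := by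
    intro j h1 h2 h
    have hpos := hv j h1 h2
    rw [inner_self_eq_zero.mp h, inner_zero_left] at hpos
    exact lt_irrefl _ hpos
  have hstep : ∀ t, t + 1 ≤ r →
      2 * ⟪armComp φ t (ω 1), θ (t + 1)⟫ = ⟪θ (t + 1), θ (t + 1)⟫ →
      armComp φ (t + 1) (ω 1) = armComp φ t (ω 1) - θ (t + 1) := by
    intro t ht h
    change φ (t + 1) (armComp φ t (ω 1)) = _
    rw [hφ (t + 1) (by omega) ht, h, div_self (hne _ (by omega) ht), one_smul]
  have key : ∀ t, t < k →
      2 * ⟪armComp φ t (ω 1), θ (t + 1)⟫ = ⟪θ (t + 1), θ (t + 1)⟫ ∧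
      ∀ j, t + 1 < j → j ≤ r → ⟪armComp φ t (ω 1), θ j⟫ = 0 := by
    intro t
    induction t with
    | zero =>
      intro _
      refine ⟨?_, fun j hj hjr => ?_⟩
      · simpa [armComp] using hω 1 1 le_rfl (by omega) le_rfl (by omega)
      · have h := hω 1 j le_rfl (by omega) (by omega) hjr
        rw [if_neg (by omega)] at h
        change ⟪ω 1, θ j⟫ = 0
        linarith
    | succ t ih =>
      intro ht
      obtain ⟨h1, h2⟩ := ih (by omega)
      rw [hstep t (by omega) h1]
      refine ⟨?_, fun j hj hjr => ?_⟩
      · obtain ⟨ha, hb⟩ := harm1 (t + 1) (by omega) ht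
        rw [inner_sub_left, h2 (t + 1 + 1) (by omega) (by omega)]
        linarith
      · have habs : 1 < |((t + 1 : ℕ) : ℤ) - (j : ℤ)| := by
          rw [lt_abs]
          omega
        rw [inner_sub_left, h2 j (by omega) hjr,
          harm2 (t + 1) j (by omega) ht (by omega) hjr habs, sub_zero]
  rw [hstep s (by omega) (key s (by omega)).1, inner_sub_left]
  linarith [hv (s + 1) (by omega) (by omega)]
end

section
/- For every v in the fundamental Weyl chamber FWC, every element w of the Weyl group W, and every s with 0 ≤ s ≤ k−1: either w(ω) = (φ_t∘φ_{t-1}∘⋯∘φ_1)(ω) for some t with 0 ≤ t ≤ s, or ⟨w(ω),v⟩ < ⟨(φ_s∘φ_{s-1}∘⋯∘φ_1)(ω),v⟩. In particular, the k highest values of ⟨w(ω),v⟩ as w ranges over W are exactly ⟨ω,v⟩ > ⟨φ_1(ω),v⟩ > ⋯ > ⟨(φ_{k-1}∘⋯∘φ_1)(ω),v⟩. -/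
/-!
Write `c = ⟪θ 1, θ 1⟫` and `μ_s = φ_s ⋯ φ_1 ω_1`. Along the arm every simple reflection subtracts
exactly one simple root, so `μ_s = ω_1 - θ_1 - ⋯ - θ_s` (`armComp_eq`).

Every point of the Weyl orbit has the form `x = ω_1 - ∑ n_t θ_t` with natural coefficients
(`orbit_sub_nonneg`). This is an induction on the length of a word: a word ending in `φ_i` sends
`ω_1` to `w ω_1` or to `w ω_1 - w θ_i`, and if `w θ_i` is a negative root then the exchange
property (`exchange`) provides a shorter word.

If `n_1, …, n_s ≥ 1`, then `μ_s - x` is a nonnegative combination of simple roots, so that either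
`x = μ_s` or `⟪x, v⟫ < ⟪μ_s, v⟫`. Otherwise let `j ≤ s` be the least index with `n_j = 0`. Then
`ω_1 - x = A + B` with `A` supported on `θ_1, …, θ_{j-1}` and `B` on `θ_{j+1}, …, θ_r`, and `A ⟂ B`.
The Weyl group preserves norms, so `‖A‖² + ‖B‖² = n_1 c`. On the other hand
`2‖A‖² = c (n_1² + ∑ (n_i - n_{i+1})² + n_{j-1}²)` (bounded below in `arm_norm`), and as
`n_{j-1} ≥ 1` this forces `B = 0` and `n_1 = ⋯ = n_{j-1} = 1`, that is `x = μ_{j-1}`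
(`eq_of_gap`). For `j = 1` one has `A = 0` and `n_1 = 0`, and `B = 0` is immediate.
-/


open scoped RealInnerProductSpace

/-! ### Words in the simple reflections -/

/-- The action on `E` of the word `l` in the maps `φ i`; the last letter acts first. -/
def wordAct {E : Type*} (φ : ℕ → E → E) (l : List ℕ) (x : E) : E :=
  l.foldr (fun i x => φ i x) x

theorem wordAct_append {E : Type*} (φ : ℕ → E → E) (l m : List ℕ) (x : E) :
    wordAct φ (l ++ m) x = wordAct φ l (wordAct φ m x) := by
  simp [wordAct]

section Words

variable {E : Type*} [NormedAddCommGroup E] [InnerProductSpace ℝ E]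

theorem wordAct_sub_smul {r : ℕ} {θ : ℕ → E} {φ : ℕ → E → E}
    (hφ : ∀ i, 1 ≤ i → i ≤ r → ∀ x : E,
      φ i x = x - (2 * ⟪x, θ i⟫ / ⟪θ i, θ i⟫) • θ i)
    (l : List ℕ) (hl : ∀ i ∈ l, 1 ≤ i ∧ i ≤ r) (x y : E) (c : ℝ) :
    wordAct φ l (x - c • y) = wordAct φ l x - c • wordAct φ l y := by
  induction l with
  | nil => rfl
  | cons j u ih =>
    have ih := ih (fun i hi => hl i (List.mem_cons_of_mem _ hi))
    obtain ⟨h1, h2⟩ := hl j List.mem_cons_self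
    change φ j (wordAct φ u _) = φ j (wordAct φ u x) - c • φ j (wordAct φ u y)
    rw [ih, hφ j h1 h2, hφ j h1 h2, hφ j h1 h2, inner_sub_left, real_inner_smul_left]
    module

theorem inner_wordAct {r : ℕ} {θ : ℕ → E} {φ : ℕ → E → E}
    (hθ : ∀ i, 1 ≤ i → i ≤ r → 0 < ⟪θ i, θ i⟫)
    (hφ : ∀ i, 1 ≤ i → i ≤ r → ∀ x : E,
      φ i x = x - (2 * ⟪x, θ i⟫ / ⟪θ i, θ i⟫) • θ i)
    (l : List ℕ) (hl : ∀ i ∈ l, 1 ≤ i ∧ i ≤ r) (x y : E) :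
    ⟪wordAct φ l x, wordAct φ l y⟫ = ⟪x, y⟫ := by
  induction l with
  | nil => rfl
  | cons j u ih =>
    have ih := ih (fun i hi => hl i (List.mem_cons_of_mem _ hi))
    obtain ⟨h1, h2⟩ := hl j List.mem_cons_self
    change ⟪φ j (wordAct φ u x), φ j (wordAct φ u y)⟫ = _
    have h := (hθ j h1 h2).ne'
    rw [hφ j h1 h2, hφ j h1 h2, ← ih]
    simp only [inner_sub_left, inner_sub_right, real_inner_smul_left, real_inner_smul_right]
    rw [real_inner_comm (wordAct φ u y) (θ j)]
    field_simp
    ring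

theorem wordAct_mem {r : ℕ} {θ : ℕ → E} {φ : ℕ → E → E} {Φ : Finset E}
    (hθΦ : ∀ i, 1 ≤ i → i ≤ r → θ i ∈ Φ)
    (hrefl : ∀ α ∈ Φ, ∀ β ∈ Φ, β - (2 * ⟪β, α⟫ / ⟪α, α⟫) • α ∈ Φ)
    (hφ : ∀ i, 1 ≤ i → i ≤ r → ∀ x : E,
      φ i x = x - (2 * ⟪x, θ i⟫ / ⟪θ i, θ i⟫) • θ i)
    (l : List ℕ) (hl : ∀ i ∈ l, 1 ≤ i ∧ i ≤ r) (x : E) (hx : x ∈ Φ) :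
    wordAct φ l x ∈ Φ := by
  induction l with
  | nil => exact hx
  | cons j u ih =>
    have ih := ih (fun i hi => hl i (List.mem_cons_of_mem _ hi))
    obtain ⟨h1, h2⟩ := hl j List.mem_cons_self
    change φ j (wordAct φ u x) ∈ Φ
    rw [hφ j h1 h2]
    exact hrefl _ (hθΦ j h1 h2) _ ih

/-- The fundamental weights read off the coordinates with respect to the simple roots. -/
theorem inner_weight_sum {r : ℕ} {θ ω : ℕ → E}
    (hω : ∀ i j, 1 ≤ i → i ≤ r → 1 ≤ j → j ≤ r →
      2 * ⟪ω i, θ j⟫ = if i = j then ⟪θ j, θ j⟫ else 0)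
    (a : ℕ → ℝ) (i : ℕ) (h1 : 1 ≤ i) (h2 : i ≤ r) :
    2 * ⟪ω i, ∑ t ∈ Finset.Icc 1 r, a t • θ t⟫ = a i * ⟪θ i, θ i⟫ := by
  rw [inner_sum, Finset.mul_sum, Finset.sum_eq_single i]
  · rw [real_inner_smul_right, mul_left_comm, hω i i h1 h2 h1 h2, if_pos rfl]
  · intro t ht hti
    rw [Finset.mem_Icc] at ht
    rw [real_inner_smul_right, mul_left_comm, hω i t h1 h2 ht.1 ht.2, if_neg (Ne.symm hti),
      mul_zero]
  · intro h
    exact absurd (Finset.mem_Icc.2 ⟨h1, h2⟩) h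

/-- The only positive root that the simple reflection `φ j` makes negative is `θ j`. -/
theorem eq_simple_of_reflect_neg {r : ℕ} {θ ω : ℕ → E} {φ : ℕ → E → E} {Φ P : Finset E}
    (hθ : ∀ i, 1 ≤ i → i ≤ r → 0 < ⟪θ i, θ i⟫)
    (hred : ∀ α ∈ Φ, ∀ c : ℝ, c • α ∈ Φ → c = 1 ∨ c = -1)
    (hPΦ : P ⊆ Φ)
    (hsimple : ∀ i, 1 ≤ i → i ≤ r → θ i ∈ P)
    (hpos : ∀ α ∈ P, ∃ n : ℕ → ℕ, α = ∑ t ∈ Finset.Icc 1 r, (n t : ℝ) • θ t)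
    (hφ : ∀ i, 1 ≤ i → i ≤ r → ∀ x : E,
      φ i x = x - (2 * ⟪x, θ i⟫ / ⟪θ i, θ i⟫) • θ i)
    (hω : ∀ i j, 1 ≤ i → i ≤ r → 1 ≤ j → j ≤ r →
      2 * ⟪ω i, θ j⟫ = if i = j then ⟪θ j, θ j⟫ else 0)
    (j : ℕ) (h1 : 1 ≤ j) (h2 : j ≤ r) (α : E) (hα : α ∈ P) (hn : -φ j α ∈ P) :
    α = θ j := by
  obtain ⟨n, hnα⟩ := hpos α hα
  obtain ⟨m, hm⟩ := hpos _ hn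
  -- Off `j`, the coordinates of `α` and of `-φ j α` are natural numbers and opposite.
  have hz : ∀ t ∈ Finset.Icc 1 r, t ≠ j → n t = 0 := by
    intro t ht htj
    rw [Finset.mem_Icc] at ht
    have e1 := inner_weight_sum hω (fun t => (n t : ℝ)) t ht.1 ht.2
    have e2 := inner_weight_sum hω (fun t => (m t : ℝ)) t ht.1 ht.2
    have e3 := hω t j ht.1 ht.2 h1 h2
    rw [if_neg htj] at e3
    rw [← hnα] at e1
    rw [← hm, hφ j h1 h2, inner_neg_right, inner_sub_right, real_inner_smul_right] at e2
    have e4 : ⟪ω t, θ j⟫ = 0 := by linarith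
    rw [e4] at e2
    have h0 : ((n t : ℝ) + m t) * ⟪θ t, θ t⟫ = 0 := by linarith
    rcases mul_eq_zero.1 h0 with h0 | h0
    · have : n t + m t = 0 := by exact_mod_cast h0
      omega
    · exact absurd h0 (hθ t ht.1 ht.2).ne'
  have hα' : α = (n j : ℝ) • θ j := by
    rw [hnα]
    refine Finset.sum_eq_single j (fun t ht htj => ?_) (fun h => ?_)
    · rw [hz t ht htj]; simp
    · exact absurd (Finset.mem_Icc.2 ⟨h1, h2⟩) h
  rcases hred (θ j) (hPΦ (hsimple j h1 h2)) (n j) (hα' ▸ hPΦ hα) with h | h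
  · rw [hα', h, one_smul]
  · have : (0 : ℝ) ≤ n j := Nat.cast_nonneg _
    linarith

/-- Exchange property: if `l` makes the simple root `θ i` negative, then `l φ_i` is the action of
a word strictly shorter than `l`. -/
theorem exchange {r : ℕ} {θ ω : ℕ → E} {φ : ℕ → E → E} {Φ P : Finset E}
    (hθ : ∀ i, 1 ≤ i → i ≤ r → 0 < ⟪θ i, θ i⟫)
    (hred : ∀ α ∈ Φ, ∀ c : ℝ, c • α ∈ Φ → c = 1 ∨ c = -1)
    (hrefl : ∀ α ∈ Φ, ∀ β ∈ Φ, β - (2 * ⟪β, α⟫ / ⟪α, α⟫) • α ∈ Φ)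
    (hPΦ : P ⊆ Φ)
    (hsimple : ∀ i, 1 ≤ i → i ≤ r → θ i ∈ P)
    (hpos : ∀ α ∈ P, ∃ n : ℕ → ℕ, α = ∑ t ∈ Finset.Icc 1 r, (n t : ℝ) • θ t)
    (hsplit : ∀ α ∈ Φ, (α ∈ P ∧ -α ∉ P) ∨ (-α ∈ P ∧ α ∉ P))
    (hφ : ∀ i, 1 ≤ i → i ≤ r → ∀ x : E,
      φ i x = x - (2 * ⟪x, θ i⟫ / ⟪θ i, θ i⟫) • θ i)
    (hω : ∀ i j, 1 ≤ i → i ≤ r → 1 ≤ j → j ≤ r →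
      2 * ⟪ω i, θ j⟫ = if i = j then ⟪θ j, θ j⟫ else 0)
    (i : ℕ) (hi1 : 1 ≤ i) (hi2 : i ≤ r)
    (l : List ℕ) (hl : ∀ i ∈ l, 1 ≤ i ∧ i ≤ r) (hn : wordAct φ l (θ i) ∉ P) :
    ∃ l' : List ℕ, (∀ i ∈ l', 1 ≤ i ∧ i ≤ r) ∧ l'.length < l.length ∧
      ∀ x, wordAct φ l (φ i x) = wordAct φ l' x := by
  induction l with
  | nil => exact absurd (hsimple i hi1 hi2) hn
  | cons j u ih =>
    have hu : ∀ i ∈ u, 1 ≤ i ∧ i ≤ r := fun i hi => hl i (List.mem_cons_of_mem _ hi)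
    obtain ⟨h1, h2⟩ := hl j List.mem_cons_self
    by_cases hp : wordAct φ u (θ i) ∈ P
    · have hmem : φ j (wordAct φ u (θ i)) ∈ Φ :=
        wordAct_mem (fun i a b => hPΦ (hsimple i a b)) hrefl hφ (j :: u) hl _
          (hPΦ (hsimple i hi1 hi2))
      have hneg : -φ j (wordAct φ u (θ i)) ∈ P := by
        rcases hsplit _ hmem with h | h
        · exact absurd h.1 hn
        · exact h.1
      have heq := eq_simple_of_reflect_neg hθ hred hPΦ hsimple hpos hφ hω j h1 h2 _ hp hneg
      refine ⟨u, hu, by simp, fun x => ?_⟩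
      -- `u θ_i = θ_j` gives `u φ_i = φ_j u`, and the two copies of `φ_j` cancel.
      have c1 : ⟪x, θ i⟫ = ⟪wordAct φ u x, θ j⟫ := by
        rw [← heq, inner_wordAct hθ hφ u hu]
      have c2 : ⟪θ i, θ i⟫ = ⟪θ j, θ j⟫ := by
        rw [← heq, inner_wordAct hθ hφ u hu]
      have h := (hθ j h1 h2).ne'
      change φ j (wordAct φ u (φ i x)) = _
      rw [hφ i hi1 hi2, wordAct_sub_smul hφ u hu, heq, c1, c2, hφ j h1 h2, inner_sub_left,
        real_inner_smul_left, sub_sub, ← add_smul, sub_eq_self]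
      convert zero_smul ℝ (θ j) using 2
      field_simp
      ring
    · obtain ⟨l', h3, h4, h5⟩ := ih hu hp
      refine ⟨j :: l', ?_, by simpa using h4, fun x => ?_⟩
      · intro t ht
        rcases List.mem_cons.1 ht with rfl | ht
        · exact ⟨h1, h2⟩
        · exact h3 t ht
      · change φ j (wordAct φ u (φ i x)) = φ j (wordAct φ l' x)
        rw [h5]

/-- Every point of the Weyl orbit of `ω 1` is `ω 1` minus a combination of simple roots with
natural coefficients. -/
theorem orbit_sub_nonneg {r : ℕ} {θ ω : ℕ → E} {φ : ℕ → E → E} {Φ P : Finset E} (hr : 1 ≤ r)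
    (hθ : ∀ i, 1 ≤ i → i ≤ r → 0 < ⟪θ i, θ i⟫)
    (hred : ∀ α ∈ Φ, ∀ c : ℝ, c • α ∈ Φ → c = 1 ∨ c = -1)
    (hrefl : ∀ α ∈ Φ, ∀ β ∈ Φ, β - (2 * ⟪β, α⟫ / ⟪α, α⟫) • α ∈ Φ)
    (hPΦ : P ⊆ Φ)
    (hsimple : ∀ i, 1 ≤ i → i ≤ r → θ i ∈ P)
    (hpos : ∀ α ∈ P, ∃ n : ℕ → ℕ, α = ∑ t ∈ Finset.Icc 1 r, (n t : ℝ) • θ t)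
    (hsplit : ∀ α ∈ Φ, (α ∈ P ∧ -α ∉ P) ∨ (-α ∈ P ∧ α ∉ P))
    (hφ : ∀ i, 1 ≤ i → i ≤ r → ∀ x : E,
      φ i x = x - (2 * ⟪x, θ i⟫ / ⟪θ i, θ i⟫) • θ i)
    (hω : ∀ i j, 1 ≤ i → i ≤ r → 1 ≤ j → j ≤ r →
      2 * ⟪ω i, θ j⟫ = if i = j then ⟪θ j, θ j⟫ else 0)
    (N : ℕ) : ∀ l : List ℕ, l.length ≤ N → (∀ i ∈ l, 1 ≤ i ∧ i ≤ r) →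
      ∃ n : ℕ → ℕ, wordAct φ l (ω 1) = ω 1 - ∑ t ∈ Finset.Icc 1 r, (n t : ℝ) • θ t := by
  induction N with
  | zero =>
    intro l hN hl
    obtain rfl : l = [] := List.length_eq_zero_iff.1 (by omega)
    exact ⟨fun _ => 0, by simp [wordAct]⟩
  | succ N ih =>
    intro l hN hl
    rcases List.eq_nil_or_concat l with rfl | ⟨w, i, rfl⟩
    · exact ⟨fun _ => 0, by simp [wordAct]⟩
    rw [List.concat_eq_append] at hN hl ⊢
    rw [List.length_append, List.length_singleton] at hN
    have hw : ∀ i ∈ w, 1 ≤ i ∧ i ≤ r := fun t ht => hl t (by simp [ht])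
    obtain ⟨h1, h2⟩ := hl i (by simp)
    rw [wordAct_append]
    change ∃ n : ℕ → ℕ, wordAct φ w (φ i (ω 1)) = _
    by_cases hp : wordAct φ w (θ i) ∈ P
    · obtain ⟨n, hn⟩ := ih w (by omega) hw
      obtain ⟨m, hm⟩ := hpos _ hp
      have e := hω 1 i le_rfl hr h1 h2
      rw [hφ i h1 h2, e, wordAct_sub_smul hφ w hw, hn]
      by_cases hi : 1 = i
      · refine ⟨fun t => n t + m t, ?_⟩
        rw [if_pos hi, div_self (hθ i h1 h2).ne', one_smul, hm, sub_sub,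
          ← Finset.sum_add_distrib]
        simp only [Nat.cast_add, add_smul]
      · exact ⟨n, by rw [if_neg hi]; simp⟩
    · obtain ⟨l', h3, h4, h5⟩ :=
        exchange hθ hred hrefl hPΦ hsimple hpos hsplit hφ hω i h1 h2 w hw hp
      rw [h5]
      exact ih l' (by omega) h3

/-! ### Geometry of the arm -/

theorem arm_length {k : ℕ} {θ : ℕ → E}
    (harm1 : ∀ i, 1 ≤ i → i < k →
      ⟪θ (i + 1), θ (i + 1)⟫ = ⟪θ i, θ i⟫ ∧
        2 * ⟪θ i, θ (i + 1)⟫ = -⟪θ i, θ i⟫)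
    (m : ℕ) (h1 : 1 ≤ m) : m ≤ k → ⟪θ m, θ m⟫ = ⟪θ 1, θ 1⟫ := by
  induction m, h1 using Nat.le_induction with
  | base => intro _; rfl
  | succ m h1 ih => intro h; rw [(harm1 m h1 (by omega)).1, ih (by omega)]

theorem inner_arm_sum {r k : ℕ} {θ : ℕ → E} (hkr : k ≤ r)
    (harm1 : ∀ i, 1 ≤ i → i < k →
      ⟪θ (i + 1), θ (i + 1)⟫ = ⟪θ i, θ i⟫ ∧
        2 * ⟪θ i, θ (i + 1)⟫ = -⟪θ i, θ i⟫)
    (harm2 : ∀ i j, 1 ≤ i → i < k → 1 ≤ j → j ≤ r → 1 < |(i : ℤ) - (j : ℤ)| →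
      ⟪θ i, θ j⟫ = 0)
    (a : ℕ → ℝ) (m : ℕ) (h1 : 1 ≤ m) (h2 : m < k) :
    2 * ⟪∑ t ∈ Finset.Icc 1 m, a t • θ t, θ (m + 1)⟫ = -(a m * ⟪θ 1, θ 1⟫) := by
  rw [sum_inner, Finset.mul_sum, Finset.sum_eq_single m]
  · rw [real_inner_smul_left, mul_left_comm, (harm1 m h1 h2).2, arm_length harm1 m h1 h2.le]
    ring
  · intro t ht htm
    rw [Finset.mem_Icc] at ht
    rw [real_inner_smul_left, harm2 t (m + 1) ht.1 (by omega) (by omega) (by omega)]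
    · simp
    · rw [lt_abs]; right; push_cast; omega
  · intro h
    exact absurd (Finset.mem_Icc.2 ⟨h1, le_rfl⟩) h

theorem armComp_eq {r k : ℕ} {θ ω : ℕ → E} {φ : ℕ → E → E} (hkr : k ≤ r)
    (hθ : ∀ i, 1 ≤ i → i ≤ r → 0 < ⟪θ i, θ i⟫)
    (hφ : ∀ i, 1 ≤ i → i ≤ r → ∀ x : E,
      φ i x = x - (2 * ⟪x, θ i⟫ / ⟪θ i, θ i⟫) • θ i)
    (hω : ∀ i j, 1 ≤ i → i ≤ r → 1 ≤ j → j ≤ r →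
      2 * ⟪ω i, θ j⟫ = if i = j then ⟪θ j, θ j⟫ else 0)
    (harm1 : ∀ i, 1 ≤ i → i < k →
      ⟪θ (i + 1), θ (i + 1)⟫ = ⟪θ i, θ i⟫ ∧
        2 * ⟪θ i, θ (i + 1)⟫ = -⟪θ i, θ i⟫)
    (harm2 : ∀ i j, 1 ≤ i → i < k → 1 ≤ j → j ≤ r → 1 < |(i : ℤ) - (j : ℤ)| →
      ⟪θ i, θ j⟫ = 0)
    (s : ℕ) : s < k → armComp φ s (ω 1) = ω 1 - ∑ t ∈ Finset.Icc 1 s, θ t := by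
  induction s with
  | zero => intro _; simp [armComp]
  | succ s ih =>
    intro hs
    change φ (s + 1) (armComp φ s (ω 1)) = _
    rw [ih (by omega), hφ (s + 1) (by omega) (by omega), Finset.sum_Icc_succ_top (by omega),
      ← sub_sub]
    have hc := (hθ (s + 1) (by omega) (by omega)).ne'
    have e := hω 1 (s + 1) le_rfl (by omega) (by omega) (by omega)
    have key : 2 * ⟪ω 1 - ∑ t ∈ Finset.Icc 1 s, θ t, θ (s + 1)⟫ = ⟪θ (s + 1), θ (s + 1)⟫ := by
      rw [inner_sub_left, mul_sub, e]
      rcases Nat.eq_zero_or_pos s with rfl | h0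
      · simp
      · have h := inner_arm_sum hkr harm1 harm2 (fun _ => 1) s h0 (by omega)
        simp only [one_smul, one_mul] at h
        rw [h, if_neg (by omega), arm_length harm1 (s + 1) (by omega) (by omega)]
        ring
    rw [key, div_self hc, one_smul]

/-- Lower bound for the norm of a combination of arm roots, with its equality case. It comes from
`2‖∑ n_t θ_t‖² = c (n_1² + ∑ (n_i - n_{i+1})² + n_m²)`; the remainder `D` is
`(n_1 - 1)² + ∑ (n_i - n_{i+1})²`, which vanishes only if all `n_i` are `1`. -/
theorem arm_norm {r k : ℕ} {θ : ℕ → E} (hkr : k ≤ r)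
    (harm1 : ∀ i, 1 ≤ i → i < k →
      ⟪θ (i + 1), θ (i + 1)⟫ = ⟪θ i, θ i⟫ ∧
        2 * ⟪θ i, θ (i + 1)⟫ = -⟪θ i, θ i⟫)
    (harm2 : ∀ i j, 1 ≤ i → i < k → 1 ≤ j → j ≤ r → 1 < |(i : ℤ) - (j : ℤ)| →
      ⟪θ i, θ j⟫ = 0)
    (a : ℕ → ℝ) (m : ℕ) (h1 : 1 ≤ m) : m ≤ k →
    ∃ D : ℝ, 0 ≤ D ∧ (D = 0 → ∀ i, 1 ≤ i → i ≤ m → a i = 1) ∧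
      2 * ⟪∑ t ∈ Finset.Icc 1 m, a t • θ t, ∑ t ∈ Finset.Icc 1 m, a t • θ t⟫ =
        ⟪θ 1, θ 1⟫ * (D + a m ^ 2 + 2 * a 1 - 1) := by
  induction m, h1 using Nat.le_induction with
  | base =>
    intro _
    refine ⟨(a 1 - 1) ^ 2, sq_nonneg _, fun h i hi1 hi2 => ?_, ?_⟩
    · obtain rfl : i = 1 := by omega
      have := pow_eq_zero_iff (two_ne_zero) |>.1 h
      linarith
    · simp only [Finset.Icc_self, Finset.sum_singleton, real_inner_smul_left,
        real_inner_smul_right]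
      ring
  | succ m h1 ih =>
    intro hm
    obtain ⟨D, hD0, hD, h⟩ := ih (by omega)
    refine ⟨D + (a m - a (m + 1)) ^ 2, by positivity, fun h0 i hi1 hi2 => ?_, ?_⟩
    · have hsq := sq_nonneg (a m - a (m + 1))
      have hD1 : D = 0 := by linarith
      have h3 : (a m - a (m + 1)) ^ 2 = 0 := by linarith
      have h4 := pow_eq_zero_iff (two_ne_zero) |>.1 h3
      have h5 := hD hD1 m h1 le_rfl
      rcases Nat.lt_or_ge m i with h6 | h6
      · obtain rfl : i = m + 1 := by omega
        linarith
      · exact hD hD1 i hi1 h6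
    · have hx := inner_arm_sum hkr harm1 harm2 a m h1 (by omega)
      have hc := arm_length harm1 (m + 1) (by omega) hm
      rw [Finset.sum_Icc_succ_top (by omega)]
      generalize (∑ t ∈ Finset.Icc 1 m, a t • θ t) = A at *
      simp only [inner_add_left, inner_add_right, real_inner_smul_left, real_inner_smul_right]
      rw [real_inner_comm A (θ (m + 1)), hc]
      linear_combination h + 2 * a (m + 1) * hx

/-- A point with the norm of `ω 1` whose first vanishing coefficient lies at the arm position
`m + 1 < k` is `ω 1 - θ 1 - ⋯ - θ m`. -/
theorem eq_of_gap {r k : ℕ} {θ ω : ℕ → E} (hkr : k ≤ r)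
    (hθ : ∀ i, 1 ≤ i → i ≤ r → 0 < ⟪θ i, θ i⟫)
    (hω : ∀ i j, 1 ≤ i → i ≤ r → 1 ≤ j → j ≤ r →
      2 * ⟪ω i, θ j⟫ = if i = j then ⟪θ j, θ j⟫ else 0)
    (harm1 : ∀ i, 1 ≤ i → i < k →
      ⟪θ (i + 1), θ (i + 1)⟫ = ⟪θ i, θ i⟫ ∧
        2 * ⟪θ i, θ (i + 1)⟫ = -⟪θ i, θ i⟫)
    (harm2 : ∀ i j, 1 ≤ i → i < k → 1 ≤ j → j ≤ r → 1 < |(i : ℤ) - (j : ℤ)| →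
      ⟪θ i, θ j⟫ = 0)
    (n : ℕ → ℕ) (m : ℕ) (hm : m + 1 < k) (hge : ∀ i, 1 ≤ i → i ≤ m → 1 ≤ n i)
    (h0 : n (m + 1) = 0) (x : E)
    (hx : x = ω 1 - ∑ t ∈ Finset.Icc 1 r, (n t : ℝ) • θ t) (hnorm : ⟪x, x⟫ = ⟪ω 1, ω 1⟫) :
    x = ω 1 - ∑ t ∈ Finset.Icc 1 m, θ t := by
  have hc := hθ 1 le_rfl (by omega)
  have hw := inner_weight_sum hω (fun t => (n t : ℝ)) 1 le_rfl (by omega)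
  have hsplit : ∑ t ∈ Finset.Icc 1 r, (n t : ℝ) • θ t =
      (∑ t ∈ Finset.Icc 1 m, (n t : ℝ) • θ t) + ∑ t ∈ Finset.Icc (m + 2) r, (n t : ℝ) • θ t := by
    rw [← Finset.sum_union]
    · symm
      refine Finset.sum_subset (fun t ht => ?_) (fun t ht ht' => ?_)
      · simp only [Finset.mem_union, Finset.mem_Icc] at ht ⊢; omega
      · simp only [Finset.mem_union, Finset.mem_Icc] at ht ht'
        obtain rfl : t = m + 1 := by omega
        simp [h0]
    · rw [Finset.disjoint_left]
      intro t ht ht'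
      simp only [Finset.mem_Icc] at ht ht'; omega
  have horth : ⟪∑ t ∈ Finset.Icc 1 m, (n t : ℝ) • θ t,
      ∑ t ∈ Finset.Icc (m + 2) r, (n t : ℝ) • θ t⟫ = 0 := by
    rw [sum_inner]
    refine Finset.sum_eq_zero fun i hi => ?_
    rw [inner_sum]
    refine Finset.sum_eq_zero fun j hj => ?_
    rw [Finset.mem_Icc] at hi hj
    rw [real_inner_smul_left, real_inner_smul_right,
      harm2 i j hi.1 (by omega) (by omega) hj.2 (by rw [lt_abs]; right; omega)]
    simp
  rw [hx, inner_sub_left, inner_sub_right, inner_sub_right,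
    real_inner_comm (ω 1) (∑ t ∈ Finset.Icc 1 r, (n t : ℝ) • θ t)] at hnorm
  have hzz : ⟪∑ t ∈ Finset.Icc 1 r, (n t : ℝ) • θ t, ∑ t ∈ Finset.Icc 1 r, (n t : ℝ) • θ t⟫ =
      n 1 * ⟪θ 1, θ 1⟫ := by linarith
  rw [hsplit] at hzz hx
  generalize hB : (∑ t ∈ Finset.Icc (m + 2) r, (n t : ℝ) • θ t) = B at *
  have hBn : 0 ≤ ⟪B, B⟫ := real_inner_self_nonneg
  rw [inner_add_left, inner_add_right, inner_add_right, real_inner_comm _ B, horth] at hzz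
  rcases Nat.eq_zero_or_pos m with rfl | hmpos
  · rw [h0] at hzz
    have : ⟪B, B⟫ = 0 := by simpa using hzz
    rw [inner_self_eq_zero] at this
    simpa [this] using hx
  · obtain ⟨D, hD0, hD, h⟩ := arm_norm hkr harm1 harm2 (fun t => (n t : ℝ)) m hmpos (by omega)
    have hnm : (1 : ℝ) ≤ n m := by exact_mod_cast hge m hmpos le_rfl
    have hsum : ⟪θ 1, θ 1⟫ * D + ⟪θ 1, θ 1⟫ * ((n m : ℝ) ^ 2 - 1) + 2 * ⟪B, B⟫ = 0 := by
      linear_combination 2 * hzz - h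
    have p1 : 0 ≤ ⟪θ 1, θ 1⟫ * D := by positivity
    have p2 : 0 ≤ ⟪θ 1, θ 1⟫ * ((n m : ℝ) ^ 2 - 1) := mul_nonneg hc.le (by nlinarith)
    have hDz : D = 0 := by
      rcases mul_eq_zero.1 (show ⟪θ 1, θ 1⟫ * D = 0 by linarith) with h | h
      · exact absurd h hc.ne'
      · exact h
    have hBz : B = 0 := inner_self_eq_zero (𝕜 := ℝ) |>.1 (by linarith)
    rw [hx, hBz, add_zero]
    congr 1
    refine Finset.sum_congr rfl fun t ht => ?_
    rw [Finset.mem_Icc] at ht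
    have := hD hDz t ht.1 ht.2
    rw [this, one_smul]

end Words

theorem stmt_7
    {E : Type*} [NormedAddCommGroup E] [InnerProductSpace ℝ E] [FiniteDimensional ℝ E]
    (r k : ℕ) (θ ω : ℕ → E) (φ : ℕ → E → E)
    -- Φ is a reduced crystallographic root system spanning E
    (Φ P : Finset E)
    (hspan : Submodule.span ℝ (Φ : Set E) = ⊤)
    (hΦ0 : (0 : E) ∉ Φ)
    (hcrys : ∀ α ∈ Φ, ∀ β ∈ Φ, ∃ n : ℤ, 2 * ⟪α, β⟫ = (n : ℝ) * ⟪β, β⟫)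
    (hred : ∀ α ∈ Φ, ∀ c : ℝ, c • α ∈ Φ → c = 1 ∨ c = -1)
    (hrefl : ∀ α ∈ Φ, ∀ β ∈ Φ, β - (2 * ⟪β, α⟫ / ⟪α, α⟫) • α ∈ Φ)
    -- θ 1, …, θ r is the base of simple roots, with positive roots P
    (hbasis : LinearIndependent ℝ (fun i : Fin r => θ (i + 1)) ∧
      Submodule.span ℝ (Set.range fun i : Fin r => θ (i + 1)) = ⊤)
    (hPΦ : P ⊆ Φ)
    (hsimple : ∀ i, 1 ≤ i → i ≤ r → θ i ∈ P)
    (hpos : ∀ α ∈ P, ∃ n : ℕ → ℕ, α = ∑ t ∈ Finset.Icc 1 r, (n t : ℝ) • θ t)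
    (hsplit : ∀ α ∈ Φ, (α ∈ P ∧ -α ∉ P) ∨ (-α ∈ P ∧ α ∉ P))
    -- the simple reflections, the identity `φ 0`, and the fundamental weights
    (hφ0 : φ 0 = id)
    (hφ : ∀ i, 1 ≤ i → i ≤ r → ∀ x : E,
      φ i x = x - (2 * ⟪x, θ i⟫ / ⟪θ i, θ i⟫) • θ i)
    (hω : ∀ i j, 1 ≤ i → i ≤ r → 1 ≤ j → j ≤ r →
      2 * ⟪ω i, θ j⟫ = if i = j then ⟪θ j, θ j⟫ else 0)
    -- the arm condition of length k
    (hk1 : 1 ≤ k) (hkr : k ≤ r)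
    (harm1 : ∀ i, 1 ≤ i → i < k →
      ⟪θ (i + 1), θ (i + 1)⟫ = ⟪θ i, θ i⟫ ∧
        2 * ⟪θ i, θ (i + 1)⟫ = -⟪θ i, θ i⟫)
    (harm2 : ∀ i j, 1 ≤ i → i < k → 1 ≤ j → j ≤ r → 1 < |(i : ℤ) - (j : ℤ)| →
      ⟪θ i, θ j⟫ = 0)
    -- v in the fundamental Weyl chamber
    (v : E) (hv : ∀ j, 1 ≤ j → j ≤ r → 0 < ⟪θ j, v⟫)
    -- an element of the Weyl group: a word in the simple reflections
    (l : List ℕ) (hl : ∀ i ∈ l, 1 ≤ i ∧ i ≤ r)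
    (s : ℕ) (hs : s < k) :
    (∃ t ≤ s, l.foldr (fun i x => φ i x) (ω 1) = armComp φ t (ω 1)) ∨
      ⟪l.foldr (fun i x => φ i x) (ω 1), v⟫ < ⟪armComp φ s (ω 1), v⟫ := by
  have hθ : ∀ i, 1 ≤ i → i ≤ r → 0 < ⟪θ i, θ i⟫ := by
    intro i h1 h2
    refine real_inner_self_pos.2 fun h => hΦ0 ?_
    rw [← h]
    exact hPΦ (hsimple i h1 h2)
  have harm := armComp_eq hkr hθ hφ hω harm1 harm2
  obtain ⟨n, hn⟩ := orbit_sub_nonneg (hk1.trans hkr) hθ hred hrefl hPΦ hsimple hpos hsplit hφ hω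
    l.length l le_rfl hl
  have hnorm := inner_wordAct hθ hφ l hl (ω 1) (ω 1)
  change (∃ t ≤ s, wordAct φ l (ω 1) = armComp φ t (ω 1)) ∨
      ⟪wordAct φ l (ω 1), v⟫ < ⟪armComp φ s (ω 1), v⟫
  by_cases hall : ∀ i, 1 ≤ i → i ≤ s → 1 ≤ n i
  · -- `b` lists the coefficients of `μ_s - x`.
    set b : ℕ → ℝ := fun t => (n t : ℝ) - if t ≤ s then 1 else 0 with hb
    have hb0 : ∀ t ∈ Finset.Icc 1 r, 0 ≤ b t := by
      intro t ht
      rw [Finset.mem_Icc] at ht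
      simp only [hb]
      split_ifs with h
      · have : (1 : ℝ) ≤ n t := by exact_mod_cast hall t ht.1 h
        linarith
      · simp
    have hdiff : armComp φ s (ω 1) - wordAct φ l (ω 1) = ∑ t ∈ Finset.Icc 1 r, b t • θ t := by
      have h1 : ∑ t ∈ Finset.Icc 1 s, θ t =
          ∑ t ∈ Finset.Icc 1 r, (if t ≤ s then (1 : ℝ) else 0) • θ t := by
        simp only [ite_smul, one_smul, zero_smul]
        rw [← Finset.sum_filter]
        refine Finset.sum_congr ?_ fun _ _ => rfl
        ext t
        simp only [Finset.mem_filter, Finset.mem_Icc]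
        omega
      rw [harm s hs, hn, h1]
      simp only [hb, sub_smul, Finset.sum_sub_distrib]
      abel
    have hterm : ∀ t ∈ Finset.Icc 1 r, 0 ≤ b t * ⟪θ t, v⟫ := fun t ht =>
      mul_nonneg (hb0 t ht) (hv t (Finset.mem_Icc.1 ht).1 (Finset.mem_Icc.1 ht).2).le
    have hin : ⟪armComp φ s (ω 1), v⟫ - ⟪wordAct φ l (ω 1), v⟫ =
        ∑ t ∈ Finset.Icc 1 r, b t * ⟪θ t, v⟫ := by
      rw [← inner_sub_left, hdiff, sum_inner]
      simp only [real_inner_smul_left]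
    rcases (Finset.sum_nonneg hterm).eq_or_lt with h | h
    · left
      refine ⟨s, le_rfl, ?_⟩
      have hz := (Finset.sum_eq_zero_iff_of_nonneg hterm).1 h.symm
      symm
      rw [← sub_eq_zero, hdiff]
      refine Finset.sum_eq_zero fun t ht => ?_
      have hvt := hv t (Finset.mem_Icc.1 ht).1 (Finset.mem_Icc.1 ht).2
      rw [(mul_eq_zero.1 (hz t ht)).resolve_right hvt.ne', zero_smul]
    · right
      linarith
  · left
    have hex : ∃ m, m + 1 ≤ s ∧ n (m + 1) = 0 := by
      push Not at hall
      obtain ⟨i, h1, h2, h3⟩ := hall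
      refine ⟨i - 1, by omega, ?_⟩
      rw [Nat.sub_add_cancel h1]
      omega
    classical
    obtain ⟨hm1, hm2⟩ := Nat.find_spec hex
    have hmin : ∀ i, 1 ≤ i → i ≤ Nat.find hex → 1 ≤ n i := by
      intro i h1 h2
      have := Nat.find_min hex (m := i - 1) (by omega)
      rw [Nat.sub_add_cancel h1] at this
      by_contra hcon
      exact this ⟨by omega, by omega⟩
    refine ⟨Nat.find hex, by omega, ?_⟩
    rw [harm _ (by omega)]
    exact eq_of_gap hkr hθ hω harm1 harm2 n _ (by omega) hmin hm2 _ hn hnorm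
end

section
/- Let m ∈ M be a nonzero weight vector of weight α such that x·m = 0 for every positive root θ ∈ Φ⁺ and every x ∈ L_θ. Then M is spanned over ℂ by the vectors x_s·(x_{s-1}·(⋯·(x_1·m)⋯)) with s ≥ 0, where each x_j either belongs to H or belongs to a negative root space L_{−θ} with θ ∈ Φ⁺. -/
/-!
The span `W` of the monomials in `m` is stable under `H` and under the negative root spaces by
construction. By Cartan's criterion `L` has nondegenerate Killing form, so `L` is spanned by `H`
and the root spaces (`span_cartan_union_rootSpc`). The commutation rule
`⁅x, ⁅y, w⁆⁆ = ⁅⁅x, y⁆, w⁆ + ⁅y, ⁅x, w⁆⁆` then shows, by induction on the length of the monomial and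
simultaneously for all `x : L`, that `W` is stable under `L`; in length zero the positive root
vectors kill `m`. Thus `W` is a submodule containing `m ≠ 0`, and irreducibility gives `W = M`.
-/

/-- The root space of a linear functional `θ` on a Cartan subalgebra `H` of `L`:
the set of `x : L` with `⁅h, x⁆ = θ h • x` for all `h ∈ H`. -/
def rootSpc {L : Type*} [LieRing L] [LieAlgebra ℂ L] (H : LieSubalgebra ℂ L)
    (θ : Module.Dual ℂ H) : Set L :=
  {x | ∀ h : H, ⁅(h : L), x⁆ = θ h • x}

/-- The weight space of a linear functional `β` on `H` in an `L`-module `M`. -/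
def wtSpc {L : Type*} [LieRing L] [LieAlgebra ℂ L] (H : LieSubalgebra ℂ L)
    {M : Type*} [AddCommGroup M] [Module ℂ M] [LieRingModule L M]
    (β : Module.Dual ℂ H) : Set M :=
  {m | ∀ h : H, ⁅(h : L), m⁆ = β h • m}

/-- The root space decomposition: the sum of `H` and of the root spaces of the functionals `θ`
and `-θ` for `θ ∈ P` is all of `L`, as soon as `P ∪ -P` contains every root. -/
theorem span_cartan_union_rootSpc
    {L : Type*} [LieRing L] [LieAlgebra ℂ L] [FiniteDimensional ℂ L]
    [LieAlgebra.IsSemisimple ℂ L]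
    (H : LieSubalgebra ℂ L) [H.IsCartanSubalgebra]
    (P : Finset (Module.Dual ℂ H))
    (hP : ∀ θ : Module.Dual ℂ H,
      (θ ≠ 0 ∧ ∃ x : L, x ≠ 0 ∧ x ∈ rootSpc H θ) → (θ ∈ P ∨ -θ ∈ P)) :
    Submodule.span ℂ {x : L | x ∈ H ∨ (∃ θ ∈ P, x ∈ rootSpc H (-θ)) ∨
      ∃ θ ∈ P, x ∈ rootSpc H θ} = ⊤ := by
  rw [eq_top_iff]
  have htop := congrArg LieSubmodule.toSubmodule
    (LieModule.iSup_genWeightSpace_eq_top' ℂ H L)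
  rw [LieSubmodule.iSup_toSubmodule, LieSubmodule.top_toSubmodule] at htop
  rw [← htop, iSup_le_iff]
  intro χ x hx
  apply Submodule.subset_span
  by_cases hχ : χ.IsZero
  · left
    have hxz : x ∈ LieAlgebra.rootSpace H (0 : H → ℂ) := by
      have h0 : (χ : H → ℂ) = 0 := hχ
      rw [← h0]
      exact hx
    rw [LieAlgebra.rootSpace_zero_eq] at hxz
    exact hxz
  · right
    -- The Cartan subalgebra acts semisimply, so generalised root vectors are root vectors.
    have hroot : ∀ y ∈ LieAlgebra.rootSpace H χ, y ∈ rootSpc H χ.toLinear := fun y hy h =>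
      LieAlgebra.IsKilling.lie_eq_smul_of_mem_rootSpace hy h
    have hne : χ.toLinear ≠ 0 := fun h => hχ (by
      funext t
      exact LinearMap.congr_fun h t)
    obtain ⟨y, hy, hy0⟩ := χ.exists_ne_zero
    rcases hP χ.toLinear ⟨hne, y, hy0, hroot y hy⟩ with h | h
    · exact Or.inr ⟨_, h, hroot x hx⟩
    · exact Or.inl ⟨_, h, by rw [neg_neg]; exact hroot x hx⟩

theorem stmt_14
    {L : Type*} [LieRing L] [LieAlgebra ℂ L] [FiniteDimensional ℂ L]
    [LieAlgebra.IsSemisimple ℂ L]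
    (H : LieSubalgebra ℂ L) [H.IsCartanSubalgebra]
    {M : Type*} [AddCommGroup M] [Module ℂ M] [LieRingModule L M] [LieModule ℂ L M]
    [FiniteDimensional ℂ M] [Nontrivial M] [LieModule.IsIrreducible ℂ L M]
    -- `P` is a positive system in the set `Φ` of roots of `(L, H)`
    (P : Finset (Module.Dual ℂ H))
    (hPΦ : ∀ θ : Module.Dual ℂ H,
      (θ ≠ 0 ∧ ∃ x : L, x ≠ 0 ∧ x ∈ rootSpc H θ) ↔ (θ ∈ P ∨ -θ ∈ P))
    (hdisj : ∀ θ ∈ P, -θ ∉ P)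
    (hposfun : ∃ f : Module.Dual ℂ H → ℝ,
      (∀ a b : Module.Dual ℂ H, f (a + b) = f a + f b) ∧
      (∀ (c : ℝ) (a : Module.Dual ℂ H), f ((c : ℂ) • a) = c * f a) ∧
      (∀ θ ∈ P, 0 < f θ))
    (α : Module.Dual ℂ H) (m : M) (hm : m ≠ 0) (hmα : m ∈ wtSpc H α)
    (hann : ∀ θ ∈ P, ∀ x ∈ rootSpc H θ, ⁅x, m⁆ = 0) :
    Submodule.span ℂ
      {v : M | ∃ l : List L,
        (∀ x ∈ l, x ∈ H ∨ ∃ θ ∈ P, x ∈ rootSpc H (-θ)) ∧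
        v = l.foldr (fun x w => ⁅x, w⁆) m} = ⊤ := by
  set G : Set L := {x | x ∈ H ∨ ∃ θ ∈ P, x ∈ rootSpc H (-θ)} with hG
  set W : Submodule ℂ M := Submodule.span ℂ
      {v : M | ∃ l : List L,
        (∀ x ∈ l, x ∈ H ∨ ∃ θ ∈ P, x ∈ rootSpc H (-θ)) ∧
        v = l.foldr (fun x w => ⁅x, w⁆) m} with hW
  have hmem : ∀ l : List L, (∀ x ∈ l, x ∈ G) → l.foldr (fun x w => ⁅x, w⁆) m ∈ W :=
    fun l hl => Submodule.subset_span ⟨l, hl, rfl⟩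
  have hcons : ∀ y ∈ G, ∀ l : List L, (∀ x ∈ l, x ∈ G) →
      ⁅y, l.foldr (fun x w => ⁅x, w⁆) m⁆ ∈ W := fun y hy l hl =>
    hmem (y :: l) (List.forall_mem_cons.2 ⟨hy, hl⟩)
  have hGW : ∀ y ∈ G, ∀ w ∈ W, ⁅y, w⁆ ∈ W := by
    intro y hy w hw
    refine (Submodule.span_le (p := W.comap (LieModule.toEnd ℂ L M y))).2 ?_ hw
    rintro _ ⟨l, hl, rfl⟩
    exact hcons y hy l hl
  -- The induction must treat all `x : L` at once, since `⁅x, y⁆` may lie in any root space.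
  have hall : ∀ l : List L, (∀ x ∈ l, x ∈ G) → ∀ x : L,
      ⁅x, l.foldr (fun x w => ⁅x, w⁆) m⁆ ∈ W := by
    intro l
    induction l with
    | nil =>
      intro _ x
      have hx : x ∈ Submodule.span ℂ {x : L | x ∈ H ∨ (∃ θ ∈ P, x ∈ rootSpc H (-θ)) ∨
          ∃ θ ∈ P, x ∈ rootSpc H θ} := by
        rw [span_cartan_union_rootSpc H P fun θ => (hPΦ θ).1]
        exact Submodule.mem_top
      refine (Submodule.span_le
        (p := W.comap ((LieModule.toEnd ℂ L M : L →ₗ[ℂ] Module.End ℂ M).flip m))).2 ?_ hx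
      rintro y (hy | hy | ⟨θ, hθ, hy⟩)
      · exact hcons y (Or.inl hy) [] (by simp)
      · exact hcons y (Or.inr hy) [] (by simp)
      · change ⁅y, m⁆ ∈ W
        rw [hann θ hθ y hy]
        exact W.zero_mem
    | cons y l ih =>
      intro hl x
      obtain ⟨hy, hl'⟩ := List.forall_mem_cons.1 hl
      rw [List.foldr_cons, leibniz_lie]
      exact W.add_mem (ih hl' _) (hGW y hy _ (ih hl' x))
  let N : LieSubmodule ℂ L M :=
    { W with
      lie_mem := by
        intro x w hw
        refine (Submodule.span_le (p := W.comap (LieModule.toEnd ℂ L M x))).2 ?_ hw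
        rintro _ ⟨l, hl, rfl⟩
        exact hall l hl x }
  have hmN : m ∈ N := hmem [] (by simp)
  have hN : N = ⊤ := (eq_bot_or_eq_top N).resolve_left fun h => hm (by
    rw [h] at hmN
    exact (LieSubmodule.mem_bot m).1 hmN)
  exact congrArg LieSubmodule.toSubmodule hN
end

section
/- Suppose m and m′ are nonzero weight vectors of M, of weights α and α′ respectively, and suppose both are annihilated by all positive root spaces: x·m = 0 and x·m′ = 0 for every θ ∈ Φ⁺ and every x ∈ L_θ. Then α = α′. -/
section HighestWeight

variable {L : Type*} [LieRing L] [LieAlgebra ℂ L] (H : LieSubalgebra ℂ L)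
  {M : Type*} [AddCommGroup M] [Module ℂ M] [LieRingModule L M] [LieModule ℂ L M]

/-- A subspace that contains `H` and every root space of a semisimple Lie algebra is everything. -/
theorem mem_of_cartan_of_roots [FiniteDimensional ℂ L] [LieAlgebra.IsSemisimple ℂ L]
    [H.IsCartanSubalgebra] (S : Submodule ℂ L) (hH : ∀ h : H, (h : L) ∈ S)
    (hroot : ∀ θ : Module.Dual ℂ H, θ ≠ 0 → ∀ x ∈ rootSpc H θ, x ∈ S) (x : L) : x ∈ S := by
  have htop := LieModule.iSup_genWeightSpace_eq_top' ℂ H L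
  have hx : x ∈ (⨆ χ : LieModule.Weight ℂ H L, LieAlgebra.rootSpace H χ).toSubmodule := by
    rw [htop]; trivial
  rw [LieSubmodule.iSup_toSubmodule] at hx
  refine (iSup_le fun χ => ?_ : _ ≤ S) hx
  intro y hy
  by_cases hχ : χ.toLinear = 0
  · have h0 : (χ : H → ℂ) = 0 := by
      ext h
      exact LinearMap.congr_fun hχ h
    rw [h0, LieAlgebra.rootSpace_zero_eq] at hy
    exact hH ⟨y, by simpa using hy⟩
  · exact hroot _ hχ y fun h => LieAlgebra.IsKilling.lie_eq_smul_of_mem_rootSpace hy h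

variable [FiniteDimensional ℂ L] [LieAlgebra.IsSemisimple ℂ L] [H.IsCartanSubalgebra]
  [LieModule.IsIrreducible ℂ L M]

/-- A weight vector killed by the positive root spaces generates the irreducible module `M` under the
negative root spaces alone. -/
theorem generated_by_negative (P : Finset (Module.Dual ℂ H))
    (hPΦ : ∀ θ : Module.Dual ℂ H,
      (θ ≠ 0 ∧ ∃ x : L, x ≠ 0 ∧ x ∈ rootSpc H θ) ↔ (θ ∈ P ∨ -θ ∈ P))
    (α : Module.Dual ℂ H) (m : M) (hm : m ≠ 0) (hmα : m ∈ wtSpc H α)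
    (hann : ∀ θ ∈ P, ∀ x ∈ rootSpc H θ, ⁅x, m⁆ = 0)
    (U : Submodule ℂ M) (hmU : m ∈ U)
    (hU : ∀ θ ∈ P, ∀ y ∈ rootSpc H (-θ), ∀ v ∈ U, ⁅y, v⁆ ∈ U) : U = ⊤ := by
  let C : Set (Submodule ℂ M) :=
    {N | m ∈ N ∧ ∀ θ ∈ P, ∀ y ∈ rootSpc H (-θ), ∀ v ∈ N, ⁅y, v⁆ ∈ N}
  let V : Submodule ℂ M := sInf C
  have hmV : m ∈ V := Submodule.mem_sInf.2 fun N hN => hN.1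
  have hV : ∀ θ ∈ P, ∀ y ∈ rootSpc H (-θ), ∀ v ∈ V, ⁅y, v⁆ ∈ V := fun θ hθ y hy v hv =>
    Submodule.mem_sInf.2 fun N hN => hN.2 θ hθ y hy v (Submodule.mem_sInf.1 hv N hN)
  have hLm : ∀ x : L, ⁅x, m⁆ ∈ V := by
    let S : Submodule ℂ L :=
      V.comap ((LieModule.toEnd ℂ L M : L →ₗ[ℂ] Module.End ℂ M).flip m)
    have hS : ∀ x, x ∈ S ↔ ⁅x, m⁆ ∈ V := fun x => Iff.rfl
    refine fun x => (hS x).1 (mem_of_cartan_of_roots H S ?_ ?_ x)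
    · intro h
      rw [hS, hmα h]
      exact V.smul_mem _ hmV
    · intro θ hθ y hy
      rw [hS]
      by_cases hy0 : y = 0
      · simp [hy0]
      rcases (hPΦ θ).1 ⟨hθ, y, hy0, hy⟩ with h | h
      · rw [hann θ h y hy]
        exact V.zero_mem
      · exact hV _ h y (by rwa [neg_neg]) m hmV
  let N : Submodule ℂ M :=
    { carrier := {v | v ∈ V ∧ ∀ x : L, ⁅x, v⁆ ∈ V}
      add_mem' := fun ha hb => ⟨V.add_mem ha.1 hb.1, fun x => by
        rw [lie_add]; exact V.add_mem (ha.2 x) (hb.2 x)⟩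
      zero_mem' := ⟨V.zero_mem, fun x => by rw [lie_zero]; exact V.zero_mem⟩
      smul_mem' := fun c v hv => ⟨V.smul_mem c hv.1, fun x => by
        rw [lie_smul]; exact V.smul_mem c (hv.2 x)⟩ }
  have hNC : N ∈ C := by
    refine ⟨⟨hmV, hLm⟩, fun θ hθ y hy v hv => ⟨hV θ hθ y hy v hv.1, fun x => ?_⟩⟩
    rw [leibniz_lie]
    exact V.add_mem (hv.2 _) (hV θ hθ y hy _ (hv.2 x))
  have hVN : V ≤ N := sInf_le hNC
  let W : LieSubmodule ℂ L M := { V with lie_mem := fun {x v} hv => (hVN hv).2 x }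
  have hmW : m ∈ W := hmV
  have hW : W = ⊤ := (IsSimpleOrder.eq_bot_or_eq_top W).resolve_left fun h => by
    rw [h] at hmW
    exact hm ((LieSubmodule.mem_bot m).1 hmW)
  refine eq_top_iff.2 fun v _ => ?_
  have hv : v ∈ W := hW ▸ LieSubmodule.mem_top v
  exact (sInf_le (⟨hmU, hU⟩ : U ∈ C) : V ≤ U) hv

/-- Every weight `α'` of `M` is either equal to the weight `α` of a vector killed by the positive
root spaces, or strictly smaller with respect to the positivity functional `f`. -/
theorem eq_or_lt_of_highest (P : Finset (Module.Dual ℂ H))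
    (hPΦ : ∀ θ : Module.Dual ℂ H,
      (θ ≠ 0 ∧ ∃ x : L, x ≠ 0 ∧ x ∈ rootSpc H θ) ↔ (θ ∈ P ∨ -θ ∈ P))
    (f : Module.Dual ℂ H → ℝ) (hadd : ∀ a b : Module.Dual ℂ H, f (a + b) = f a + f b)
    (hpos : ∀ θ ∈ P, 0 < f θ)
    (α α' : Module.Dual ℂ H) (m m' : M) (hm : m ≠ 0) (hm' : m' ≠ 0)
    (hmα : m ∈ wtSpc H α) (hmα' : m' ∈ wtSpc H α')
    (hann : ∀ θ ∈ P, ∀ x ∈ rootSpc H θ, ⁅x, m⁆ = 0) : α' = α ∨ f α' < f α := by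
  by_contra hcon
  let B : Set (Module.Dual ℂ H) := {β | β = α ∨ f β < f α}
  have hαB : α' ∉ B := hcon
  let U : Submodule ℂ M := Submodule.span ℂ {v | ∃ β ∈ B, v ∈ wtSpc H β}
  have hUtop : U = ⊤ := by
    refine generated_by_negative H P hPΦ α m hm hmα hann U
      (Submodule.subset_span ⟨α, Or.inl rfl, hmα⟩) fun θ hθ y hy v hv => ?_
    induction hv using Submodule.span_induction with
    | mem v hv =>
      obtain ⟨β, hβ, hv⟩ := hv
      refine Submodule.subset_span ⟨-θ + β, Or.inr ?_, fun h => ?_⟩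
      · have h1 := hadd θ (-θ + β)
        rw [add_neg_cancel_left] at h1
        have h2 := hpos θ hθ
        rcases hβ with rfl | hβ <;> linarith
      · rw [leibniz_lie, hy h, hv h, smul_lie, lie_smul, ← add_smul, LinearMap.add_apply]
    | zero => rw [lie_zero]; exact U.zero_mem
    | add a b _ _ ha hb => rw [lie_add]; exact U.add_mem ha hb
    | smul c a _ ha => rw [lie_smul]; exact U.smul_mem c ha
  have hgen : ∀ (β : Module.Dual ℂ H) (v : M), v ∈ wtSpc H β →
      v ∈ LieModule.genWeightSpace M (β : H → ℂ) := fun β v hv =>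
    LieModule.weightSpace_le_genWeightSpace M _ ((LieModule.mem_weightSpace _ v).2 hv)
  have hUle : U ≤ (⨆ (χ : H → ℂ) (_ : χ ≠ α'), LieModule.genWeightSpace M χ).toSubmodule := by
    refine Submodule.span_le.2 ?_
    rintro v ⟨β, hβ, hv⟩
    have hne : (β : H → ℂ) ≠ α' := fun h => hαB (DFunLike.coe_injective h ▸ hβ)
    exact (le_iSup₂_of_le (f := fun (χ : H → ℂ) (_ : χ ≠ α') => LieModule.genWeightSpace M χ)
      (β : H → ℂ) hne le_rfl) (hgen β v hv)
  have hdis := LieModule.iSupIndep_genWeightSpace ℂ H M (α' : H → ℂ)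
  have hmem := hdis.le_bot ⟨hgen α' m' hmα', hUle (hUtop ▸ Submodule.mem_top)⟩
  exact hm' ((LieSubmodule.mem_bot m').1 hmem)

end HighestWeight

theorem stmt_15
    {L : Type*} [LieRing L] [LieAlgebra ℂ L] [FiniteDimensional ℂ L]
    [LieAlgebra.IsSemisimple ℂ L]
    (H : LieSubalgebra ℂ L) [H.IsCartanSubalgebra]
    {M : Type*} [AddCommGroup M] [Module ℂ M] [LieRingModule L M] [LieModule ℂ L M]
    [FiniteDimensional ℂ M] [Nontrivial M] [LieModule.IsIrreducible ℂ L M]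
    -- `P` is a positive system in the set `Φ` of roots of `(L, H)`
    (P : Finset (Module.Dual ℂ H))
    (hPΦ : ∀ θ : Module.Dual ℂ H,
      (θ ≠ 0 ∧ ∃ x : L, x ≠ 0 ∧ x ∈ rootSpc H θ) ↔ (θ ∈ P ∨ -θ ∈ P))
    (hdisj : ∀ θ ∈ P, -θ ∉ P)
    (hposfun : ∃ f : Module.Dual ℂ H → ℝ,
      (∀ a b : Module.Dual ℂ H, f (a + b) = f a + f b) ∧
      (∀ (c : ℝ) (a : Module.Dual ℂ H), f ((c : ℂ) • a) = c * f a) ∧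
      (∀ θ ∈ P, 0 < f θ))
    (α α' : Module.Dual ℂ H) (m m' : M) (hm : m ≠ 0) (hm' : m' ≠ 0)
    (hmα : m ∈ wtSpc H α) (hmα' : m' ∈ wtSpc H α')
    (hann : ∀ θ ∈ P, ∀ x ∈ rootSpc H θ, ⁅x, m⁆ = 0)
    (hann' : ∀ θ ∈ P, ∀ x ∈ rootSpc H θ, ⁅x, m'⁆ = 0) :
    α = α' := by
  obtain ⟨f, hadd, -, hpos⟩ := hposfun
  rcases eq_or_lt_of_highest H P hPΦ f hadd hpos α α' m m' hm hm' hmα hmα' hann with h | h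
  · exact h.symm
  rcases eq_or_lt_of_highest H P hPΦ f hadd hpos α' α m' m hm' hm hmα' hmα hann' with h' | h'
  · exact h'
  · exact absurd h h'.not_gt
end
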